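/- Let μ and μ' be stable matchings. If P and P' are two principal blocks of Γ*(μ,μ') having a vertex in common, then for any v ∈ V(P) ∩ (μ ∪ μ') and any u ∈ V(P') ∩ (μ ∪ μ'), v is linked to u. -/

import Mathlib

/-!
Let `E` be the span of the inequalities tight at `μ` and `μ'`. Three families of inequalities
valid for every stable matching `ν` suffice.

* `x_a ≥ 0`, which is tight at both for `a ∉ μ ∪ μ'`. Hence vectors of `E` may be altered freely
  at acceptable pairs outside `μ ∪ μ'`.
* `-∑_w x_(m,w) ≥ -1`, and likewise for women. If `m` is matched in both `μ` and `μ'`, this is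
  tight at both, so the pairs of `μ ∪ μ'` containing `m` are linked to each other.
* For an acceptable pair `p = (m,w)`, the stability inequality: the sum of `x` over the pairs
  `(m,w')` with `w ≤_m w'` and `(m',w)` with `m ≤_w m'` is at least `1`.

If blocks `P^m` and `P^w` share a vertex `p = (m,w)` which is in `μ ∪ μ'`, then `p` is linked to
both `v` and `u` by the second family. Otherwise betweenness and stability force, up to exchanging
`μ` and `μ'`, that `μ(m) <_m w ≤_m μ'(m)` and `μ'(w) <_w m ≤_w μ(w)`. The stability inequality at
`p` is then tight at both matchings and links `(m, μ'(m))` to `(μ(w), w)`; these are in turn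
linked to `v` and to `u`.

The second and third families are both instances of `SMTI.eqv_of_inter_eq_singleton`.
-/

open scoped Classical

/-- An instance of the stable marriage problem with ties: men `M`, women `W`,
acceptable pairs `Acc`, and for each man (resp. woman) a total preorder on the
acceptable partners. `mle m w w'` means `w ≤_m w'`, `wle w m m'` means `m ≤_w m'`. -/
structure SMTI (M W : Type*) where
  Acc : Set (M × W)
  mle : M → W → W → Prop
  wle : W → M → M → Prop
  mle_refl : ∀ m w, (m, w) ∈ Acc → mle m w w
  mle_trans : ∀ m w₁ w₂ w₃, mle m w₁ w₂ → mle m w₂ w₃ → mle m w₁ w₃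
  mle_total : ∀ m w w', (m, w) ∈ Acc → (m, w') ∈ Acc → mle m w w' ∨ mle m w' w
  mle_mem : ∀ m w w', mle m w w' → (m, w) ∈ Acc ∧ (m, w') ∈ Acc
  wle_refl : ∀ w m, (m, w) ∈ Acc → wle w m m
  wle_trans : ∀ w m₁ m₂ m₃, wle w m₁ m₂ → wle w m₂ m₃ → wle w m₁ m₃
  wle_total : ∀ w m m', (m, w) ∈ Acc → (m', w) ∈ Acc → wle w m m' ∨ wle w m' m
  wle_mem : ∀ w m m', wle w m m' → (m, w) ∈ Acc ∧ (m', w) ∈ Acc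

namespace SMTI

variable {M W : Type*} (I : SMTI M W)

/-- `≤_m` extended to `Option W`, where `none` (being single) is strictly below
every acceptable partner. -/
def mleO (m : M) : Option W → Option W → Prop
  | none, none => True
  | none, some w => (m, w) ∈ I.Acc
  | some _, none => False
  | some w, some w' => I.mle m w w'

/-- `≤_w` extended to `Option M`. -/
def wleO (w : W) : Option M → Option M → Prop
  | none, none => True
  | none, some m => (m, w) ∈ I.Acc
  | some _, none => False
  | some m, some m' => I.wle w m m'

/-- strict version of `mleO` -/
def mltO (m : M) (a b : Option W) : Prop := I.mleO m a b ∧ ¬ I.mleO m b a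

/-- strict version of `wleO` -/
def wltO (w : W) (a b : Option M) : Prop := I.wleO w a b ∧ ¬ I.wleO w b a

/-- A matching: a set of acceptable pairs in which every man and every woman
occurs at most once. -/
def IsMatching (μ : Set (M × W)) : Prop :=
  μ ⊆ I.Acc ∧ (∀ m w w', (m, w) ∈ μ → (m, w') ∈ μ → w = w') ∧
    (∀ m m' w, (m, w) ∈ μ → (m', w) ∈ μ → m = m')

/-- the partner `μ(m)` of a man `m` (`none` if `m` is single) -/
noncomputable def mpartner (μ : Set (M × W)) (m : M) : Option W :=
  if h : ∃ w, (m, w) ∈ μ then some h.choose else none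

/-- the partner `μ(w)` of a woman `w` (`none` if `w` is single) -/
noncomputable def wpartner (μ : Set (M × W)) (w : W) : Option M :=
  if h : ∃ m, (m, w) ∈ μ then some h.choose else none

/-- A stable matching: no acceptable pair is blocking. -/
def IsStable (μ : Set (M × W)) : Prop :=
  I.IsMatching μ ∧ ∀ p ∈ I.Acc,
    I.mleO p.1 (some p.2) (mpartner μ p.1) ∨ I.wleO p.2 (some p.1) (wpartner μ p.2)

/-- `between_m(a, b, c)` -/
def betweenM (m : M) (a b c : Option W) : Prop :=
  a = b ∨ a = c ∨ (I.mltO m b a ∧ I.mleO m a c) ∨ (I.mltO m c a ∧ I.mleO m a b)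

/-- `between_w(a, b, c)` -/
def betweenW (w : W) (a b c : Option M) : Prop :=
  a = b ∨ a = c ∨ (I.wltO w b a ∧ I.wleO w a c) ∨ (I.wltO w c a ∧ I.wleO w a b)

/-- the (directed) edge relation of the marriage graph `Γ` -/
def gammaEdge (p q : M × W) : Prop :=
  p ∈ I.Acc ∧ q ∈ I.Acc ∧
    ((p.1 = q.1 ∧ p.2 ≠ q.2 ∧ I.mle p.1 p.2 q.2) ∨
      (p.2 = q.2 ∧ p.1 ≠ q.1 ∧ I.wle p.2 p.1 q.1))

/-- the vertex set of `Γ*(μ, μ')` -/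
noncomputable def starV (μ μ' : Set (M × W)) : Set (M × W) :=
  {p | p ∈ I.Acc ∧
    I.betweenM p.1 (some p.2) (mpartner μ p.1) (mpartner μ' p.1) ∧
    I.betweenW p.2 (some p.1) (wpartner μ p.2) (wpartner μ' p.2)}

/-- undirected adjacency inside the subgraph of `Γ` induced by the vertex set `S` -/
def adjIn (S : Set (M × W)) (p q : M × W) : Prop :=
  p ∈ S ∧ q ∈ S ∧ (I.gammaEdge p q ∨ I.gammaEdge q p)

/-- `p` and `q` lie in the same weakly connected component of the subgraph of `Γ`
induced by `S` -/
def connIn (S : Set (M × W)) (p q : M × W) : Prop :=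
  p ∈ S ∧ q ∈ S ∧ Relation.ReflTransGen (I.adjIn S) p q

/-- `p` is an isolated vertex of the subgraph of `Γ` induced by `S` -/
def IsIsolated (S : Set (M × W)) (p : M × W) : Prop :=
  p ∈ S ∧ ∀ q, ¬ I.adjIn S p q

/-- `C` is a nontrivial weakly connected component of the subgraph of `Γ`
induced by `S` -/
def IsNontrivialComp (S : Set (M × W)) (C : Set (M × W)) : Prop :=
  (∃ v ∈ S, C = {u | I.connIn S v u}) ∧ ¬ C.Subsingleton

/-- `B` is the vertex set of a principal block (`P^m` or `P^w`) of the subgraph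
of `Γ` induced by `S` -/
def IsPrincipalBlock (S : Set (M × W)) (B : Set (M × W)) : Prop :=
  (∃ m : M, B = {p ∈ S | p.1 = m}) ∨ (∃ w : W, B = {p ∈ S | p.2 = w})

/-- characteristic vector `x_ν ∈ ℝ^A` of a set of pairs -/
noncomputable def chi (ν : Set (M × W)) : M × W → ℝ := fun p => if p ∈ ν then 1 else 0

/-- standard basis vector `e_v` -/
noncomputable def eVec (v : M × W) : M × W → ℝ := fun p => if p = v then 1 else 0

/-- dot product on `ℝ^{M × W}` -/
noncomputable def dotP [Fintype M] [Fintype W] (α x : M × W → ℝ) : ℝ := ∑ p, α p * x p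

/-- `E`: the span of all vectors `α` (supported on the acceptable pairs) for which
there is `β` so that `α · x ≥ β` is valid for all stable matchings and tight at
both `μ` and `μ'`. -/
noncomputable def Espace [Fintype M] [Fintype W] (μ μ' : Set (M × W)) :
    Submodule ℝ (M × W → ℝ) :=
  Submodule.span ℝ {α | (∀ p, p ∉ I.Acc → α p = 0) ∧ ∃ β : ℝ,
    (∀ ν, I.IsStable ν → β ≤ dotP α (chi ν)) ∧
    dotP α (chi μ) = β ∧ dotP α (chi μ') = β}

/-- `a` is linked to `b`: `E` contains `λ e_a + γ e_b` with `λ ≠ 0`. -/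
def linked [Fintype M] [Fintype W] (μ μ' : Set (M × W)) (a b : M × W) : Prop :=
  ∃ l g : ℝ, l ≠ 0 ∧ l • eVec a + g • eVec b ∈ I.Espace μ μ'

/-- `x_μ` and `x_μ'` are adjacent extreme points of `P_SMT`: they are distinct, and
whenever their midpoint is a convex combination of extreme points (characteristic
vectors of stable matchings), only `x_μ` and `x_μ'` get nonzero weight. -/
def AdjacentSM [Fintype M] [Fintype W] (μ μ' : Set (M × W)) : Prop :=
  chi μ ≠ chi μ' ∧
  ∀ (T : Finset (Set (M × W))) (c : Set (M × W) → ℝ),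
    (∀ ν ∈ T, I.IsStable ν) → (∀ ν ∈ T, 0 ≤ c ν) → (∑ ν ∈ T, c ν) = 1 →
    (∑ ν ∈ T, c ν • chi ν) = (2⁻¹ : ℝ) • (chi μ + chi μ') →
    ∀ ν ∈ T, c ν ≠ 0 → chi ν = chi μ ∨ chi ν = chi μ'

end SMTI

namespace SMTI

variable {M W : Type*}

/-- In `ν`, the man of `p` has a partner he likes at least as much as the woman of `p`. -/
def MUp (I : SMTI M W) (ν : Set (M × W)) (p : M × W) : Prop :=
  ∃ w', (p.1, w') ∈ ν ∧ I.mle p.1 p.2 w'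

/-- In `ν`, the woman of `p` has a partner she likes at least as much as the man of `p`. -/
def WUp (I : SMTI M W) (ν : Set (M × W)) (p : M × W) : Prop :=
  ∃ m', (m', p.2) ∈ ν ∧ I.wle p.2 p.1 m'

/-- Linkage with both coefficients nonzero, the first normalised to `1`. Unlike `linked`, this is
an equivalence relation. -/
def Eqv [Fintype M] [Fintype W] (I : SMTI M W) (μ μ' : Set (M × W)) (a b : M × W) : Prop :=
  ∃ g : ℝ, g ≠ 0 ∧ eVec a + g • eVec b ∈ I.Espace μ μ'

variable {I : SMTI M W} {μ μ' ν : Set (M × W)} {a b c p u v : M × W}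

/-! ### Partners and stability -/

lemma mpartner_spec (h : I.IsMatching ν) {m : M} {w : W} :
    mpartner ν m = some w ↔ (m, w) ∈ ν := by
  unfold mpartner
  split_ifs with hx
  · rw [Option.some.injEq]
    exact ⟨fun e => e ▸ hx.choose_spec, fun hw => h.2.1 _ _ _ hx.choose_spec hw⟩
  · simpa using fun hw => hx ⟨w, hw⟩

lemma wpartner_spec (h : I.IsMatching ν) {m : M} {w : W} :
    wpartner ν w = some m ↔ (m, w) ∈ ν := by
  unfold wpartner
  split_ifs with hx
  · rw [Option.some.injEq]
    exact ⟨fun e => e ▸ hx.choose_spec, fun hw => h.2.2 _ _ _ hx.choose_spec hw⟩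
  · simpa using fun hw => hx ⟨m, hw⟩

lemma mleO_iff_MUp (h : I.IsMatching ν) :
    I.mleO p.1 (some p.2) (mpartner ν p.1) ↔ I.MUp ν p := by
  simp only [MUp, ← mpartner_spec h]
  cases mpartner ν p.1 <;> simp [mleO]

lemma wleO_iff_WUp (h : I.IsMatching ν) :
    I.wleO p.2 (some p.1) (wpartner ν p.2) ↔ I.WUp ν p := by
  simp only [WUp, ← wpartner_spec h]
  cases wpartner ν p.2 <;> simp [wleO]

lemma IsStable.up (h : I.IsStable ν) (hp : p ∈ I.Acc) : I.MUp ν p ∨ I.WUp ν p := by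
  rw [← mleO_iff_MUp h.1, ← wleO_iff_WUp h.1]
  exact h.2 p hp

lemma betweenM_cases (h : I.IsMatching μ) (h' : I.IsMatching μ')
    (hb : I.betweenM p.1 (some p.2) (mpartner μ p.1) (mpartner μ' p.1)) (hp : p ∉ μ ∪ μ') :
    (¬ I.MUp μ p ∧ I.MUp μ' p) ∨ (¬ I.MUp μ' p ∧ I.MUp μ p) := by
  rw [← mleO_iff_MUp h, ← mleO_iff_MUp h']
  rcases hb with hb | hb | hb | hb
  · exact absurd (Or.inl ((mpartner_spec h).1 hb.symm)) hp
  · exact absurd (Or.inr ((mpartner_spec h').1 hb.symm)) hp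
  · exact Or.inl ⟨hb.1.2, hb.2⟩
  · exact Or.inr ⟨hb.1.2, hb.2⟩

lemma betweenW_cases (h : I.IsMatching μ) (h' : I.IsMatching μ')
    (hb : I.betweenW p.2 (some p.1) (wpartner μ p.2) (wpartner μ' p.2)) (hp : p ∉ μ ∪ μ') :
    (¬ I.WUp μ p ∧ I.WUp μ' p) ∨ (¬ I.WUp μ' p ∧ I.WUp μ p) := by
  rw [← wleO_iff_WUp h, ← wleO_iff_WUp h']
  rcases hb with hb | hb | hb | hb
  · exact absurd (Or.inl ((wpartner_spec h).1 hb.symm)) hp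
  · exact absurd (Or.inr ((wpartner_spec h').1 hb.symm)) hp
  · exact Or.inl ⟨hb.1.2, hb.2⟩
  · exact Or.inr ⟨hb.1.2, hb.2⟩

/-! ### Vectors in the span of the tight inequalities -/

variable [Fintype M] [Fintype W]

lemma Espace_comm : I.Espace μ μ' = I.Espace μ' μ := by
  unfold Espace
  congr 1
  ext α
  simp only [Set.mem_ofPred_eq, and_comm (a := dotP α (chi μ) = _)]

lemma Eqv.refl (a : M × W) : I.Eqv μ μ' a a := ⟨-1, by norm_num, by simp⟩

lemma Eqv.symm (h : I.Eqv μ μ' a b) : I.Eqv μ μ' b a := by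
  obtain ⟨g, hg, h⟩ := h
  refine ⟨g⁻¹, inv_ne_zero hg, ?_⟩
  have := Submodule.smul_mem _ g⁻¹ h
  rwa [smul_add, smul_smul, inv_mul_cancel₀ hg, one_smul, add_comm] at this

lemma Eqv.trans (h : I.Eqv μ μ' a b) (h' : I.Eqv μ μ' b c) : I.Eqv μ μ' a c := by
  obtain ⟨g, hg, h⟩ := h
  obtain ⟨k, hk, h'⟩ := h'
  refine ⟨-(g * k), neg_ne_zero.2 (mul_ne_zero hg hk), ?_⟩
  have := Submodule.sub_mem _ h (Submodule.smul_mem _ g h')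
  convert this using 1
  module

lemma Eqv.swap (h : I.Eqv μ μ' a b) : I.Eqv μ' μ a b := by
  unfold Eqv at *
  rwa [Espace_comm]

lemma Eqv.linked (h : I.Eqv μ μ' a b) : I.linked μ μ' a b := by
  obtain ⟨g, -, h⟩ := h
  exact ⟨1, g, one_ne_zero, by rwa [one_smul]⟩

lemma dotP_chi (S ν : Set (M × W)) : dotP (chi S) (chi ν) = ((S ∩ ν).ncard : ℝ) := by
  have h : ∀ p, chi S p * chi ν p = if p ∈ S ∩ ν then 1 else 0 := by
    intro p
    by_cases h1 : p ∈ S <;> by_cases h2 : p ∈ ν <;> simp [chi, h1, h2]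
  simp only [dotP, h, Finset.sum_boole]
  rw [Set.ncard_eq_toFinset_card']
  congr 2
  ext p
  simp

/-- Tightness of `x_a ≥ 0` at both matchings. -/
lemma eVec_mem (hp : p ∈ I.Acc) (hn : p ∉ μ ∪ μ') : eVec p ∈ I.Espace μ μ' := by
  have key : ∀ ν : Set (M × W), dotP (eVec p) (chi ν) = chi ν p := by
    intro ν
    simp [dotP, eVec]
  refine Submodule.subset_span ⟨?_, 0, ?_, ?_, ?_⟩
  · intro q hq
    exact if_neg fun e : q = p => hq (e ▸ hp)
  · intro ν _
    rw [key]
    unfold chi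
    split_ifs <;> norm_num
  · rw [key]
    exact if_neg fun h => hn (Or.inl h)
  · rw [key]
    exact if_neg fun h => hn (Or.inr h)

lemma mem_of_supported {α : M × W → ℝ} (h : ∀ p, α p ≠ 0 → p ∈ I.Acc ∧ p ∉ μ ∪ μ') :
    α ∈ I.Espace μ μ' := by
  have : α = ∑ p, α p • eVec p := by
    ext q
    simp [eVec, Finset.sum_apply]
  rw [this]
  refine Submodule.sum_mem _ fun p _ => ?_
  by_cases hp : α p = 0
  · simp [hp]
  · exact Submodule.smul_mem _ _ (eVec_mem (h p hp).1 (h p hp).2)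

/-- If `x(S) ≤ 1` is valid for all stable matchings, or `x(S) ≥ 1` is, and `S` meets `μ` only in
`a` and `μ'` only in `b`, then this inequality is tight at both, and reduces to `e_a + e_b`
modulo coordinates outside `μ ∪ μ'`. -/
lemma eqv_of_inter_eq_singleton {S : Set (M × W)} (hS : S ⊆ I.Acc)
    (hv : (∀ ν, I.IsStable ν → (S ∩ ν).Subsingleton) ∨ (∀ ν, I.IsStable ν → (S ∩ ν).Nonempty))
    (ha : S ∩ μ = {a}) (hb : S ∩ μ' = {b}) : I.Eqv μ μ' a b := by
  by_cases hab : a = b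
  · exact hab ▸ Eqv.refl a
  have hmem : chi S ∈ I.Espace μ μ' := by
    have h0 : ∀ p, p ∉ I.Acc → chi S p = 0 := fun p hp => if_neg fun h => hp (hS h)
    have h1 : dotP (chi S) (chi μ) = 1 := by rw [dotP_chi, ha]; simp
    have h2 : dotP (chi S) (chi μ') = 1 := by rw [dotP_chi, hb]; simp
    rcases hv with hv | hv
    · have hneg : ∀ x : M × W → ℝ, dotP (-chi S) x = -dotP (chi S) x := by
        intro x
        simp [dotP]
      rw [← Submodule.neg_mem_iff]
      refine Submodule.subset_span ⟨fun p hp => by simp [h0 p hp], -1, fun ν hν => ?_, ?_, ?_⟩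
      · rw [hneg, dotP_chi, neg_le_neg_iff]
        exact_mod_cast Set.ncard_le_one_iff_subsingleton.2 (hv ν hν)
      · rw [hneg, h1]
      · rw [hneg, h2]
    · refine Submodule.subset_span ⟨h0, 1, fun ν hν => ?_, h1, h2⟩
      rw [dotP_chi]
      exact_mod_cast (Set.ncard_pos).2 (hv ν hν)
  refine ⟨1, one_ne_zero, ?_⟩
  have hd : chi S - (eVec a + (1 : ℝ) • eVec b) ∈ I.Espace μ μ' := by
    apply mem_of_supported
    intro p hp
    have hA : p ∈ S ∧ p ∈ μ ↔ p = a := by rw [← Set.mem_inter_iff, ha]; rfl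
    have hB : p ∈ S ∧ p ∈ μ' ↔ p = b := by rw [← Set.mem_inter_iff, hb]; rfl
    have hne : ¬ (p = a ∧ p = b) := fun h => hab (h.1.symm.trans h.2)
    have hval : (chi S - (eVec a + (1 : ℝ) • eVec b)) p =
        (if p ∈ S then 1 else 0) - ((if p = a then 1 else 0) + (if p = b then 1 else 0)) := by
      simp [chi, eVec]
    rw [hval] at hp
    by_cases hpS : p ∈ S
    · refine ⟨hS hpS, ?_⟩
      rintro (h | h)
      · have h1 := hA.1 ⟨hpS, h⟩
        have h2 : p ≠ b := fun e => hne ⟨h1, e⟩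
        rw [if_pos hpS, if_pos h1, if_neg h2] at hp
        norm_num at hp
      · have h1 := hB.1 ⟨hpS, h⟩
        have h2 : p ≠ a := fun e => hne ⟨e, h1⟩
        rw [if_pos hpS, if_neg h2, if_pos h1] at hp
        norm_num at hp
    · have h1 : p ≠ a := fun e => hpS (hA.2 e).1
      have h2 : p ≠ b := fun e => hpS (hB.2 e).1
      rw [if_neg hpS, if_neg h1, if_neg h2] at hp
      norm_num at hp
  have := Submodule.sub_mem _ hmem hd
  rwa [sub_sub_cancel] at this

/-! ### Links between pairs of the two matchings -/

lemma eqv_of_fst_eq (hμ : I.IsStable μ) (hμ' : I.IsStable μ') (hv : v ∈ μ ∪ μ')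
    (hu : u ∈ μ ∪ μ') (h : v.1 = u.1) : I.Eqv μ μ' v u := by
  have uniq : ∀ ν, I.IsStable ν → ∀ p ∈ ν, ∀ q ∈ ν, p.1 = q.1 → p = q := by
    rintro ν hν ⟨m, w⟩ hp ⟨m', w'⟩ hq e
    obtain rfl : m = m' := e
    rw [hν.1.2.1 _ _ _ hp hq]
  have main : ∀ a ∈ μ, ∀ b ∈ μ', a.1 = b.1 → I.Eqv μ μ' a b := by
    intro a ha b hb e
    refine eqv_of_inter_eq_singleton (S := {q | q ∈ I.Acc ∧ q.1 = a.1}) (fun q hq => hq.1)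
      (Or.inl fun ν hν p hp q hq => uniq ν hν p hp.2 q hq.2 (hp.1.2.trans hq.1.2.symm)) ?_ ?_
    · refine Set.eq_singleton_iff_unique_mem.2 ⟨⟨⟨hμ.1.1 ha, rfl⟩, ha⟩, fun q hq => ?_⟩
      exact uniq μ hμ q hq.2 a ha hq.1.2
    · refine Set.eq_singleton_iff_unique_mem.2 ⟨⟨⟨hμ'.1.1 hb, e.symm⟩, hb⟩, fun q hq => ?_⟩
      exact uniq μ' hμ' q hq.2 b hb (hq.1.2.trans e)
  rcases hv with hv | hv <;> rcases hu with hu | hu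
  · exact uniq μ hμ v hv u hu h ▸ Eqv.refl v
  · exact main v hv u hu h
  · exact (main u hu v hv h.symm).symm
  · exact uniq μ' hμ' v hv u hu h ▸ Eqv.refl v

lemma eqv_of_snd_eq (hμ : I.IsStable μ) (hμ' : I.IsStable μ') (hv : v ∈ μ ∪ μ')
    (hu : u ∈ μ ∪ μ') (h : v.2 = u.2) : I.Eqv μ μ' v u := by
  have uniq : ∀ ν, I.IsStable ν → ∀ p ∈ ν, ∀ q ∈ ν, p.2 = q.2 → p = q := by
    rintro ν hν ⟨m, w⟩ hp ⟨m', w'⟩ hq e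
    obtain rfl : w = w' := e
    rw [hν.1.2.2 _ _ _ hp hq]
  have main : ∀ a ∈ μ, ∀ b ∈ μ', a.2 = b.2 → I.Eqv μ μ' a b := by
    intro a ha b hb e
    refine eqv_of_inter_eq_singleton (S := {q | q ∈ I.Acc ∧ q.2 = a.2}) (fun q hq => hq.1)
      (Or.inl fun ν hν p hp q hq => uniq ν hν p hp.2 q hq.2 (hp.1.2.trans hq.1.2.symm)) ?_ ?_
    · refine Set.eq_singleton_iff_unique_mem.2 ⟨⟨⟨hμ.1.1 ha, rfl⟩, ha⟩, fun q hq => ?_⟩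
      exact uniq μ hμ q hq.2 a ha hq.1.2
    · refine Set.eq_singleton_iff_unique_mem.2 ⟨⟨⟨hμ'.1.1 hb, e.symm⟩, hb⟩, fun q hq => ?_⟩
      exact uniq μ' hμ' q hq.2 b hb (hq.1.2.trans e)
  rcases hv with hv | hv <;> rcases hu with hu | hu
  · exact uniq μ hμ v hv u hu h ▸ Eqv.refl v
  · exact main v hv u hu h
  · exact (main u hu v hv h.symm).symm
  · exact uniq μ' hμ' v hv u hu h ▸ Eqv.refl v

/-- If the man of `p` strictly prefers `p` to `μ` but not to `μ'`, and the woman of `p` strictly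
prefers `p` to `μ'`, then the stability inequality at `p` is tight at both matchings: for `μ` only
the woman's partner contributes, for `μ'` only the man's. -/
lemma eqv_of_up (hμ : I.IsStable μ) (hμ' : I.IsStable μ') (hp : p ∈ I.Acc)
    (h1 : ¬ I.MUp μ p) (h2 : I.MUp μ' p) (h3 : ¬ I.WUp μ' p)
    (hv : v ∈ μ ∪ μ') (hu : u ∈ μ ∪ μ') (hvp : v.1 = p.1) (hup : u.2 = p.2) :
    I.Eqv μ μ' v u := by
  obtain ⟨m', ha, ha'⟩ := (hμ.up hp).resolve_left h1
  obtain ⟨w', hb, hb'⟩ := h2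
  have key : I.Eqv μ μ' (m', p.2) (p.1, w') := by
    refine eqv_of_inter_eq_singleton
      (S := {q | q ∈ I.Acc ∧ ((q.1 = p.1 ∧ I.mle p.1 p.2 q.2) ∨ (q.2 = p.2 ∧ I.wle p.2 p.1 q.1))})
      (fun q hq => hq.1) (Or.inr fun ν hν => ?_) ?_ ?_
    · rcases hν.up hp with ⟨w, h, h'⟩ | ⟨m, h, h'⟩
      · exact ⟨(p.1, w), ⟨hν.1.1 h, Or.inl ⟨rfl, h'⟩⟩, h⟩
      · exact ⟨(m, p.2), ⟨hν.1.1 h, Or.inr ⟨rfl, h'⟩⟩, h⟩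
    · refine Set.eq_singleton_iff_unique_mem.2 ⟨⟨⟨hμ.1.1 ha, Or.inr ⟨rfl, ha'⟩⟩, ha⟩, ?_⟩
      rintro ⟨m, w⟩ ⟨⟨-, ⟨e, h⟩ | ⟨e, h⟩⟩, hq⟩
      · exact absurd ⟨w, e ▸ hq, h⟩ h1
      · obtain rfl : w = p.2 := e
        rw [hμ.1.2.2 _ _ _ hq ha]
    · refine Set.eq_singleton_iff_unique_mem.2 ⟨⟨⟨hμ'.1.1 hb, Or.inl ⟨rfl, hb'⟩⟩, hb⟩, ?_⟩
      rintro ⟨m, w⟩ ⟨⟨-, ⟨e, h⟩ | ⟨e, h⟩⟩, hq⟩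
      · obtain rfl : m = p.1 := e
        rw [hμ'.1.2.1 _ _ _ hq hb]
      · exact absurd ⟨m, e ▸ hq, h⟩ h3
  exact ((eqv_of_fst_eq hμ hμ' hv (Or.inr hb) hvp).trans key.symm).trans
    (eqv_of_snd_eq hμ hμ' (Or.inl ha) hu hup.symm)

/-- The case of a man's block and a woman's block meeting in `p`. -/
lemma eqv_of_mem_starV (hμ : I.IsStable μ) (hμ' : I.IsStable μ') (hp : p ∈ I.starV μ μ')
    (hv : v ∈ μ ∪ μ') (hu : u ∈ μ ∪ μ') (hvp : v.1 = p.1) (hup : u.2 = p.2) :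
    I.Eqv μ μ' v u := by
  by_cases hpm : p ∈ μ ∪ μ'
  · exact (eqv_of_fst_eq hμ hμ' hv hpm hvp).trans (eqv_of_snd_eq hμ hμ' hpm hu hup.symm)
  obtain ⟨hA, hM, hW⟩ := hp
  have s := hμ.up hA
  have s' := hμ'.up hA
  have cW := betweenW_cases hμ.1 hμ'.1 hW hpm
  rcases betweenM_cases hμ.1 hμ'.1 hM hpm with ⟨h1, h2⟩ | ⟨h1, h2⟩
  · exact eqv_of_up hμ hμ' hA h1 h2 (by tauto) hv hu hvp hup
  · rw [Set.union_comm] at hv hu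
    exact (eqv_of_up hμ' hμ hA h1 h2 (by tauto) hv hu hvp hup).swap

end SMTI

open SMTI in

theorem stmt7 {M W : Type*} [Fintype M] [Fintype W] (I : SMTI M W)
    (μ μ' : Set (M × W)) (hμ : I.IsStable μ) (hμ' : I.IsStable μ')
    (B B' : Set (M × W))
    (hB : IsPrincipalBlock (I.starV μ μ') B)
    (hB' : IsPrincipalBlock (I.starV μ μ') B')
    (hint : (B ∩ B').Nonempty)
    (v u : M × W) (hv : v ∈ B ∩ (μ ∪ μ')) (hu : u ∈ B' ∩ (μ ∪ μ')) :
    I.linked μ μ' v u := by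
  obtain ⟨p, hpB, hpB'⟩ := hint
  obtain ⟨hvB, hv⟩ := hv
  obtain ⟨huB, hu⟩ := hu
  apply Eqv.linked
  rcases hB with ⟨m, rfl⟩ | ⟨w, rfl⟩ <;> rcases hB' with ⟨m', rfl⟩ | ⟨w', rfl⟩
  · exact eqv_of_fst_eq hμ hμ' hv hu
      ((hvB.2.trans hpB.2.symm).trans (hpB'.2.trans huB.2.symm))
  · exact eqv_of_mem_starV hμ hμ' hpB.1 hv hu (hvB.2.trans hpB.2.symm) (huB.2.trans hpB'.2.symm)
  · exact (eqv_of_mem_starV hμ hμ' hpB.1 hu hv (huB.2.trans hpB'.2.symm)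
      (hvB.2.trans hpB.2.symm)).symm
  · exact eqv_of_snd_eq hμ hμ' hv hu
      ((hvB.2.trans hpB.2.symm).trans (hpB'.2.trans huB.2.symm))
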